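/- Let d ≥ 2 be an integer and fix an integer ℓ ≥ 0. Then the radial Zernike polynomials are orthonormal in the weighted space L²([0,1], r^{d−1} dr): for all integers k, k′ ≥ 0, ∫₀¹ R_{ℓ,k}(r) · R_{ℓ,k′}(r) · r^{d−1} dr equals 1 if k = k′ and equals 0 if k ≠ k′. -/

import Mathlib

/-!
Put `a = ℓ + d/2`. After reversing the sum, `R_{ℓ,k}` is `√(2ℓ+4k+d)` times
`∑ₜ (-1)^(k-t) (k choose t) F(a+t)/k! · r^(ℓ+2t)`, where `F(y) = y(y+1)⋯(y+k-1)`, so its moment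
against `r^(ℓ+2m) r^(d-1)` is a multiple of the `k`-th forward difference at `a` of
`y ↦ F(y)/(y+m)`. Division with remainder gives `F(y)/(y+m) = F(-m)/(y+m) + G(y)` with `deg G < k`;
the `k`-th difference kills `G`, and that of `1/(y+m)` is explicit (`altSum_inv`). As
`F(-m) = ∏_{i<k} (i-m)`, the moment vanishes for `m < k`, which gives orthogonality to every
`R_{ℓ,k'}` with `k' < k`; for `k' = k` only the top coefficient of the second factor contributes,
and the moment at `m = k` gives the norm.
-/

open Finset

/-- The radial Zernike polynomial `R_{ℓ,k}` in dimension `d`. -/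
noncomputable def zernikeR (d ℓ k : ℕ) (r : ℝ) : ℝ :=
  Real.sqrt (2 * ℓ + 4 * k + d) *
    ∑ s ∈ Finset.range (k + 1),
      (-1 : ℝ) ^ s * (k.choose s : ℝ) * ((k.factorial : ℝ))⁻¹ *
        (∏ j ∈ Finset.Icc 1 k, ((ℓ : ℝ) + 2 * k - s - j + d / 2)) *
        r ^ (ℓ + 2 * (k - s))

open Polynomial in
lemma altSum_poly_eq_zero (P : ℝ[X]) (k : ℕ) (hP : P.degree < k) (a : ℝ) :
    ∑ t ∈ range (k + 1), (-1 : ℝ) ^ (k - t) * (k.choose t : ℝ) * P.eval (a + t) = 0 := by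
  by_cases h0 : P = 0
  · simp [h0]
  have h := congrFun (Polynomial.fwdDiff_iter_eq_zero_of_degree_lt
    ((Polynomial.natDegree_lt_iff_degree_lt h0).2 hP)) a
  rw [fwdDiff_iter_eq_sum_shift] at h
  simpa using h

/-- The `k`-th forward difference of `x ↦ 1/x`. -/
lemma altSum_inv (k : ℕ) (x : ℝ) (hx : 0 < x) :
    ∑ t ∈ range (k + 1), (-1 : ℝ) ^ (k - t) * (k.choose t : ℝ) * (x + t)⁻¹
      = (-1) ^ k * (k.factorial : ℝ) / ∏ i ∈ range (k + 1), (x + i) := by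
  have key : ∀ k : ℕ, ∀ x : ℝ, 0 < x → ((fwdDiff (1 : ℝ))^[k] (fun y : ℝ => y⁻¹)) x
      = (-1) ^ k * (k.factorial : ℝ) / ∏ i ∈ range (k + 1), (x + i) := by
    intro k
    induction k with
    | zero => intro x hx; simp
    | succ k ih =>
      intro x hx
      rw [Function.iterate_succ_apply', fwdDiff, ih x hx, ih (x + 1) (by linarith)]
      have e1 : ∏ i ∈ range (k + 1), (x + i) = (∏ i ∈ range k, (x + 1 + i)) * x := by
        rw [prod_range_succ']
        simp only [Nat.cast_add, Nat.cast_one, Nat.cast_zero, add_zero]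
        congr 1
        exact prod_congr rfl fun i _ => by ring
      have e2 : ∏ i ∈ range (k + 1 + 1), (x + i)
          = (∏ i ∈ range k, (x + 1 + i)) * x * (x + 1 + k) := by
        rw [prod_range_succ, e1]; push_cast; ring
      have hp : 0 < ∏ i ∈ range k, (x + 1 + i) := prod_pos fun i _ => by positivity
      have hk : 0 < x + 1 + k := by positivity
      rw [e2, e1, prod_range_succ, Nat.factorial_succ]
      push_cast
      field_simp
      ring
  rw [← key k x hx, fwdDiff_iter_eq_sum_shift]
  simp

open Polynomial in
/-- The `k`-th forward difference of `y ↦ y(y+1)⋯(y+k-1)/(y+m)` at `a`. -/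
lemma altSum_pochhammer_div (k m : ℕ) (a : ℝ) (ha : 0 < a) :
    ∑ t ∈ range (k + 1), (-1 : ℝ) ^ (k - t) * (k.choose t : ℝ) *
        (∏ i ∈ range k, (a + t + i)) * (a + t + m)⁻¹
      = (∏ i ∈ range k, ((i : ℝ) - m)) *
        ((-1) ^ k * (k.factorial : ℝ) / ∏ i ∈ range (k + 1), (a + m + i)) := by
  set F : ℝ[X] := ∏ i ∈ range k, (X + C (i : ℝ)) with hF
  have hFeval : ∀ y, F.eval y = ∏ i ∈ range k, (y + i) := by
    intro y; simp [hF, eval_prod]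
  have hFdeg : F.degree = k := by
    rw [hF, degree_prod, sum_congr rfl fun (i : ℕ) _ => degree_X_add_C (i : ℝ)]
    simp
  have hF0 : F ≠ 0 := by
    intro h; simp [h] at hFdeg
  set G := F /ₘ (X - C (-(m : ℝ))) with hG
  have hGdeg : G.degree < k := by
    rw [← hFdeg]
    exact degree_divByMonic_lt _ _ hF0 (by rw [degree_X_sub_C]; norm_num)
  have hdiv : ∀ y, F.eval y = F.eval (-(m : ℝ)) + (y + m) * G.eval y := by
    intro y
    have h := congrArg (eval y) (modByMonic_add_div F (X - C (-(m : ℝ))))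
    rw [modByMonic_X_sub_C_eq_C_eval] at h
    simp only [eval_add, eval_mul, eval_C, eval_sub, eval_X, sub_neg_eq_add] at h
    exact h.symm
  have hm : F.eval (-(m : ℝ)) = ∏ i ∈ range k, ((i : ℝ) - m) := by
    rw [hFeval]; exact prod_congr rfl fun i _ => by ring
  rw [← altSum_inv k (a + m) (by positivity), ← hm, mul_sum, ← sub_eq_zero,
    ← altSum_poly_eq_zero G k hGdeg a, ← sum_sub_distrib]
  refine sum_congr rfl fun t _ => ?_
  rw [← hFeval, hdiv (a + t)]
  have h1 : a + t + m ≠ 0 := by positivity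
  rw [show a + m + t = a + t + m by ring]
  field_simp
  ring

/-- The coefficient of `r ^ (ℓ + 2t)` in `R_{ℓ,k}`, without the normalizing square root, with
`a = ℓ + d/2`. -/
noncomputable def zernikeCoeff (a : ℝ) (k t : ℕ) : ℝ :=
  (-1) ^ (k - t) * (k.choose t : ℝ) * (k.factorial : ℝ)⁻¹ * ∏ i ∈ range k, (a + t + i)

lemma zernikeR_eq (d ℓ k : ℕ) (r : ℝ) :
    zernikeR d ℓ k r = Real.sqrt (2 * ℓ + 4 * k + d) *
      ∑ t ∈ range (k + 1), zernikeCoeff (ℓ + d / 2) k t * r ^ (ℓ + 2 * t) := by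
  rw [zernikeR, ← sum_range_reflect]
  congr 1
  refine sum_congr rfl fun t ht => ?_
  have ht' : t ≤ k := by simpa [Nat.lt_succ_iff] using ht
  rw [show k + 1 - 1 - t = k - t by omega, show k - (k - t) = t by omega, zernikeCoeff,
    Nat.choose_symm ht', Nat.cast_sub ht']
  congr 2
  rw [← prod_range_reflect, ← Finset.Ico_add_one_right_eq_Icc, prod_Ico_eq_prod_range]
  refine prod_congr (by simp) fun i hi => ?_
  have hi' : i + 1 ≤ k := by simpa using hi
  rw [show k - 1 - i = k - (i + 1) by omega, Nat.cast_sub hi']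
  push_cast
  ring

/-- The moments of `R_{ℓ,k}`, up to the factor `√(2ℓ+4k+d)/2`: those with `m < k` vanish because of the factor `∏ (i - m)`. -/
lemma sum_zernikeCoeff_div (a : ℝ) (ha : 0 < a) (k m : ℕ) :
    ∑ t ∈ range (k + 1), zernikeCoeff a k t * (a + t + m)⁻¹
      = (-1) ^ k * (∏ i ∈ range k, ((i : ℝ) - m)) / ∏ i ∈ range (k + 1), (a + m + i) := by
  have h := altSum_pochhammer_div k m a ha
  have hk : (k.factorial : ℝ) ≠ 0 := by positivity
  calc _ = (k.factorial : ℝ)⁻¹ * ∑ t ∈ range (k + 1), (-1 : ℝ) ^ (k - t) * (k.choose t : ℝ) *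
        (∏ i ∈ range k, (a + t + i)) * (a + t + m)⁻¹ := by
        rw [mul_sum]
        exact sum_congr rfl fun t _ => by rw [zernikeCoeff]; ring
    _ = _ := by rw [h]; field_simp

lemma integral_zernikeR_mul (d ℓ : ℕ) (hd : 2 ≤ d) (k k' : ℕ) :
    ∫ r in (0:ℝ)..1, zernikeR d ℓ k r * zernikeR d ℓ k' r * r ^ (d - 1)
      = Real.sqrt (2 * ℓ + 4 * k + d) * Real.sqrt (2 * ℓ + 4 * k' + d) / 2 *
        ∑ m ∈ range (k' + 1), zernikeCoeff (ℓ + d / 2) k' m *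
          ∑ t ∈ range (k + 1), zernikeCoeff (ℓ + d / 2) k t * ((ℓ + d / 2 : ℝ) + t + m)⁻¹ := by
  have h1 : ∀ r : ℝ, zernikeR d ℓ k r * zernikeR d ℓ k' r * r ^ (d - 1)
      = Real.sqrt (2 * ℓ + 4 * k + d) * Real.sqrt (2 * ℓ + 4 * k' + d) *
        ∑ m ∈ range (k' + 1), ∑ t ∈ range (k + 1), zernikeCoeff (ℓ + d / 2) k' m *
          zernikeCoeff (ℓ + d / 2) k t * r ^ (2 * ℓ + 2 * t + 2 * m + (d - 1)) := by
    intro r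
    rw [zernikeR_eq, zernikeR_eq]
    have : ∀ A B S T p : ℝ, A * S * (B * T) * p = A * B * (T * S * p) := by intros; ring
    rw [this, sum_mul_sum, sum_mul]
    congr 1
    refine sum_congr rfl fun m _ => ?_
    rw [sum_mul]
    refine sum_congr rfl fun t _ => ?_
    ring
  simp_rw [h1]
  rw [intervalIntegral.integral_const_mul, intervalIntegral.integral_finsetSum
    (fun m _ => Continuous.intervalIntegrable (by fun_prop) _ _), div_mul_eq_mul_div,
    mul_div_assoc, sum_div]
  congr 1
  refine sum_congr rfl fun m _ => ?_
  rw [intervalIntegral.integral_finsetSum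
    (fun m _ => Continuous.intervalIntegrable (by fun_prop) _ _), mul_sum, sum_div]
  refine sum_congr rfl fun t _ => ?_
  rw [intervalIntegral.integral_const_mul, integral_pow]
  have h2 : (((2 * ℓ + 2 * t + 2 * m + (d - 1) : ℕ) : ℝ) + 1) = 2 * (ℓ + d / 2 + t + m) := by
    push_cast [Nat.cast_sub (show 1 ≤ d by omega)]
    ring
  rw [h2]
  have hd' : (0 : ℝ) < d := by exact_mod_cast (by omega : 0 < d)
  have h3 : (0 : ℝ) < ℓ + d / 2 + t + m := by positivity
  simp only [one_pow, ne_eq, Nat.succ_ne_zero, not_false_eq_true, zero_pow]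
  field_simp
  ring

lemma prod_sub_eq_zero {k m : ℕ} (h : m < k) : ∏ i ∈ range k, ((i : ℝ) - m) = 0 :=
  prod_eq_zero (mem_range.2 h) (sub_self _)

lemma prod_sub_self (k : ℕ) : ∏ i ∈ range k, ((i : ℝ) - k) = (-1) ^ k * (k.factorial : ℝ) := by
  rw [← prod_range_reflect, ← prod_range_add_one_eq_factorial]
  push_cast
  have : ((-1 : ℝ)) ^ k = ∏ i ∈ range k, (-1 : ℝ) := by simp
  rw [this, ← prod_mul_distrib]
  refine prod_congr rfl fun i hi => ?_
  have hi' : i + 1 ≤ k := by simpa using hi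
  rw [show k - 1 - i = k - (i + 1) by omega, Nat.cast_sub hi']
  push_cast
  ring

lemma integral_zernikeR_of_lt (d ℓ : ℕ) (hd : 2 ≤ d) {k k' : ℕ} (h : k' < k) :
    ∫ r in (0:ℝ)..1, zernikeR d ℓ k r * zernikeR d ℓ k' r * r ^ (d - 1) = 0 := by
  have hd' : (0 : ℝ) < d := by exact_mod_cast (by omega : 0 < d)
  rw [integral_zernikeR_mul d ℓ hd, sum_eq_zero, mul_zero]
  intro m hm
  have hm' : m < k := by have := mem_range.1 hm; omega
  rw [sum_zernikeCoeff_div _ (by positivity), prod_sub_eq_zero hm']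
  simp

lemma integral_zernikeR_self (d ℓ : ℕ) (hd : 2 ≤ d) (k : ℕ) :
    ∫ r in (0:ℝ)..1, zernikeR d ℓ k r * zernikeR d ℓ k r * r ^ (d - 1) = 1 := by
  have hd' : (0 : ℝ) < d := by exact_mod_cast (by omega : 0 < d)
  have ha : (0 : ℝ) < ℓ + d / 2 := by positivity
  -- The lower coefficients meet vanishing moments; only the top one survives.
  rw [integral_zernikeR_mul d ℓ hd, sum_range_succ, sum_eq_zero, zero_add,
    Real.mul_self_sqrt (by positivity), sum_zernikeCoeff_div _ ha, prod_sub_self, zernikeCoeff,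
    prod_range_succ]
  · have hp : 0 < ∏ i ∈ range k, ((ℓ + d / 2 : ℝ) + k + i) := prod_pos fun i _ => by positivity
    have hs : ((-1 : ℝ)) ^ k * (-1) ^ k = 1 := by rw [← mul_pow]; simp
    have hk : (0 : ℝ) < ℓ + d / 2 + k + k := by positivity
    have hf : (0 : ℝ) < k.factorial := by positivity
    rw [← mul_assoc ((-1 : ℝ) ^ k), hs, Nat.sub_self, Nat.choose_self,
      show (2 * ℓ + 4 * k + d : ℝ) = 2 * (ℓ + d / 2 + k + k) by ring]
    generalize (ℓ + d / 2 + k + k : ℝ) = z at *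
    generalize (∏ i ∈ range k, ((ℓ + d / 2 : ℝ) + k + i)) = p at *
    simp only [pow_zero, Nat.cast_one]
    field_simp
  · intro m hm
    rw [sum_zernikeCoeff_div _ ha, prod_sub_eq_zero (mem_range.1 hm)]
    simp

/-- For fixed `d ≥ 2` and `ℓ ≥ 0`, the radial Zernike polynomials
are orthonormal in the weighted space `L²([0,1], r^{d-1} dr)`. -/
theorem zernikeR_orthonormal (d ℓ : ℕ) (hd : 2 ≤ d) (k k' : ℕ) :
    ∫ r in (0:ℝ)..1, zernikeR d ℓ k r * zernikeR d ℓ k' r * r ^ (d - 1)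
      = if k = k' then 1 else 0 := by
  rcases lt_trichotomy k k' with h | rfl | h
  · simp_rw [mul_comm (zernikeR d ℓ k _)]
    rw [if_neg h.ne, integral_zernikeR_of_lt d ℓ hd h]
  · rw [if_pos rfl, integral_zernikeR_self d ℓ hd]
  · rw [if_neg h.ne', integral_zernikeR_of_lt d ℓ hd h]
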